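/- Let 0 < κ ≤ 1 and let g ∈ L¹(ℝⁿ,ℂ) satisfy [g]_κ ∈ L¹(ℝⁿ). Then for every x ∈ ℝⁿ with |x| ≥ 1, the Fourier transform of g satisfies |ĝ(πx)| ≤ (1/(2(2π)^{n/2})) ‖[g]_κ‖_{L¹} |x|^{−κ}. -/

import Mathlib

/-!
The step `h = x / |x|²` has `|h| = 1 / |x| ≤ 1` and `⟪h, πx⟫ = π`, so translation by `h` changes the
sign of the Fourier integral of `g` at `πx` (`integral_increment_mul_exp`). Twice that integral is
therefore bounded by `∫ |g(y+h) - g(y)| dy`, which is at most `|h|^κ ‖[g]_κ‖_{L¹}` because the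
pointwise bound `enorm_increment_le_holderInc` fails at most at the single point `y = -h`, a null
set as `x ≠ 0` rules out dimension zero.
-/

open MeasureTheory Filter RealInnerProductSpace

noncomputable section

/-- The Hölder increment functional `[g]_κ(x) = sup { ‖g(x+h) − g(x)‖ / ‖h‖^κ :
0 < ‖h‖ ≤ 1, x + h ≠ 0 }`, valued in `ℝ≥0∞`. -/
def holderInc {E F : Type*} [NormedAddCommGroup E] [NormedAddCommGroup F]
    (κ : ℝ) (g : E → F) (x : E) : ENNReal :=
  ⨆ (h : E) (_ : 0 < ‖h‖) (_ : ‖h‖ ≤ 1) (_ : x + h ≠ 0),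
    ENNReal.ofReal (‖g (x + h) - g x‖ / ‖h‖ ^ κ)

/-- The Fourier transform with the convention `f̂(k) = (2π)^{-n/2} ∫ f(x) e^{-i x·k} dx`. -/
def ftransform {n : ℕ} (f : EuclideanSpace ℝ (Fin n) → ℂ)
    (k : EuclideanSpace ℝ (Fin n)) : ℂ :=
  ((2 * Real.pi) ^ (-(n : ℝ) / 2) : ℝ) *
    ∫ x : EuclideanSpace ℝ (Fin n), f x * Complex.exp (-Complex.I * ((⟪x, k⟫ : ℝ) : ℂ))

/-- Pointwise bound of an increment by the Hölder functional; the excluded point `y = -h` is where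
the supremum defining `holderInc` ignores the increment `h`. -/
lemma enorm_increment_le_holderInc {E F : Type*} [NormedAddCommGroup E] [NormedAddCommGroup F]
    (κ : ℝ) (g : E → F) {y h : E} (hh0 : 0 < ‖h‖) (hh1 : ‖h‖ ≤ 1) (hy : y + h ≠ 0) :
    ‖g (y + h) - g y‖ₑ ≤ ENNReal.ofReal (‖h‖ ^ κ) * holderInc κ g y := by
  have hpos : 0 < ‖h‖ ^ κ := Real.rpow_pos_of_pos hh0 κ
  have hle : ENNReal.ofReal (‖g (y + h) - g y‖ / ‖h‖ ^ κ) ≤ holderInc κ g y := by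
    unfold holderInc
    exact le_iSup_of_le h (le_iSup_of_le hh0 (le_iSup_of_le hh1 (le_iSup_of_le hy le_rfl)))
  calc ‖g (y + h) - g y‖ₑ
      = ENNReal.ofReal (‖h‖ ^ κ) * ENNReal.ofReal (‖g (y + h) - g y‖ / ‖h‖ ^ κ) := by
        rw [← ENNReal.ofReal_mul hpos.le, mul_div_cancel₀ _ hpos.ne', ofReal_norm]
    _ ≤ _ := by gcongr

/-- The half-period trick: translating `g` by `h` with `⟪h, k⟫ = π` flips the sign of its Fourier
integral at `k`, so the Fourier integral of the increment is `-2` times that of `g`. -/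
lemma integral_increment_mul_exp {n : ℕ} (g : EuclideanSpace ℝ (Fin n) → ℂ) (hg : Integrable g)
    (h k : EuclideanSpace ℝ (Fin n)) (hk : ⟪h, k⟫ = Real.pi) :
    ∫ y, (g (y + h) - g y) * Complex.exp (-Complex.I * ((⟪y, k⟫ : ℝ) : ℂ)) =
      -2 * ∫ y, g y * Complex.exp (-Complex.I * ((⟪y, k⟫ : ℝ) : ℂ)) := by
  have hint : ∀ f : EuclideanSpace ℝ (Fin n) → ℂ, Integrable f →
      Integrable (fun y => f y * Complex.exp (-Complex.I * ((⟪y, k⟫ : ℝ) : ℂ))) := by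
    intro f hf
    refine hf.mul_bdd (c := 1) ?_ (ae_of_all _ fun y => ?_)
    · exact Continuous.aestronglyMeasurable (by fun_prop)
    · rw [Complex.norm_exp]
      simp
  have hshift : ∫ y, g (y + h) * Complex.exp (-Complex.I * ((⟪y, k⟫ : ℝ) : ℂ)) =
      -∫ y, g y * Complex.exp (-Complex.I * ((⟪y, k⟫ : ℝ) : ℂ)) := by
    rw [← integral_add_right_eq_self
      (fun y => g y * Complex.exp (-Complex.I * ((⟪y, k⟫ : ℝ) : ℂ))) h, ← integral_neg]
    congr 1
    funext y
    have hexp : -Complex.I * ((⟪y + h, k⟫ : ℝ) : ℂ) =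
        -Complex.I * ((⟪y, k⟫ : ℝ) : ℂ) - Real.pi * Complex.I := by
      rw [inner_add_left, hk]
      push_cast
      ring
    rw [hexp, Complex.exp_sub, Complex.exp_pi_mul_I]
    ring
  simp_rw [sub_mul]
  rw [integral_sub (hint _ (hg.comp_add_right h)) (hint _ hg), hshift]
  ring

/-- Let `0 < κ ≤ 1` and `g ∈ L¹(ℝⁿ,ℂ)` with `[g]_κ ∈ L¹(ℝⁿ)`.  Then for
every `x` with `|x| ≥ 1`, `|ĝ(πx)| ≤ (1/(2(2π)^{n/2})) ‖[g]_κ‖_{L¹} |x|^{−κ}`. -/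
theorem statement4 {n : ℕ} (κ : ℝ) (hκ0 : 0 < κ) (hκ1 : κ ≤ 1)
    (g : EuclideanSpace ℝ (Fin n) → ℂ) (hg : Integrable g)
    (hholder : ∫⁻ x : EuclideanSpace ℝ (Fin n), holderInc κ g x < ⊤) :
    ∀ x : EuclideanSpace ℝ (Fin n), 1 ≤ ‖x‖ →
      ‖ftransform g (Real.pi • x)‖ ≤
        (1 / (2 * (2 * Real.pi) ^ ((n : ℝ) / 2))) *
          (∫⁻ y : EuclideanSpace ℝ (Fin n), holderInc κ g y).toReal * ‖x‖ ^ (-κ) := by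
  intro x hx
  have hx0 : 0 < ‖x‖ := lt_of_lt_of_le one_pos hx
  have : Nontrivial (EuclideanSpace ℝ (Fin n)) := ⟨x, 0, norm_pos_iff.mp hx0⟩
  set h : EuclideanSpace ℝ (Fin n) := (‖x‖ ^ 2)⁻¹ • x with hdef
  have hnorm : ‖h‖ = ‖x‖⁻¹ := by
    rw [hdef, norm_smul, norm_inv, norm_pow, norm_norm]
    field_simp
  have hk : ⟪h, Real.pi • x⟫ = Real.pi := by
    rw [hdef, real_inner_smul_left, real_inner_smul_right, real_inner_self_eq_norm_sq]
    field_simp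
  have hh0 : 0 < ‖h‖ := by rw [hnorm]; positivity
  have hh1 : ‖h‖ ≤ 1 := by rw [hnorm]; exact inv_le_one_of_one_le₀ hx
  have hpow : ‖h‖ ^ κ = ‖x‖ ^ (-κ) := by
    rw [hnorm, Real.inv_rpow hx0.le, Real.rpow_neg hx0.le]
  set J := ∫ y, g y * Complex.exp (-Complex.I * ((⟪y, Real.pi • x⟫ : ℝ) : ℂ)) with hJ
  have hE : ‖-2 * J‖ₑ ≤
      ENNReal.ofReal (‖h‖ ^ κ) * ∫⁻ y : EuclideanSpace ℝ (Fin n), holderInc κ g y := by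
    rw [hJ, ← integral_increment_mul_exp g hg h _ hk]
    refine (enorm_integral_le_lintegral_enorm _).trans ?_
    rw [← lintegral_const_mul' _ _ ENNReal.ofReal_ne_top]
    refine lintegral_mono_ae ?_
    have hae : ∀ᵐ y : EuclideanSpace ℝ (Fin n), y ≠ -h := by
      simp [ae_iff]
    filter_upwards [hae] with y hy
    have hone : ‖Complex.exp (-Complex.I * ((⟪y, Real.pi • x⟫ : ℝ) : ℂ))‖ₑ = 1 := by
      rw [← ofReal_norm, Complex.norm_exp]
      simp
    rw [enorm_mul, hone, mul_one]
    exact enorm_increment_le_holderInc κ g hh0 hh1 fun h0 => hy (eq_neg_of_add_eq_zero_left h0)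
  have hR : 2 * ‖J‖ ≤
      ‖x‖ ^ (-κ) * (∫⁻ y : EuclideanSpace ℝ (Fin n), holderInc κ g y).toReal := by
    have hmono := ENNReal.toReal_mono (ENNReal.mul_ne_top ENNReal.ofReal_ne_top hholder.ne) hE
    rw [toReal_enorm, ENNReal.toReal_mul, ENNReal.toReal_ofReal (by positivity), hpow,
      norm_mul, norm_neg] at hmono
    simpa using hmono
  have hc : 0 < (2 * Real.pi) ^ ((n : ℝ) / 2) := by positivity
  unfold ftransform
  rw [← hJ, norm_mul, Complex.norm_real, Real.norm_of_nonneg (by positivity), neg_div,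
    Real.rpow_neg (by positivity)]
  calc ((2 * Real.pi) ^ ((n : ℝ) / 2))⁻¹ * ‖J‖
      = 1 / (2 * (2 * Real.pi) ^ ((n : ℝ) / 2)) * (2 * ‖J‖) := by field_simp
    _ ≤ 1 / (2 * (2 * Real.pi) ^ ((n : ℝ) / 2)) * (‖x‖ ^ (-κ) *
          (∫⁻ y : EuclideanSpace ℝ (Fin n), holderInc κ g y).toReal) := by gcongr
    _ = _ := by ring
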